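/- Let P be a probability distribution over variables (X_v)_{v∈V} that is Markovian to a maximal directed ancestral graph G_0, is converse pairwise Markovian to G_0, and satisfies ordered upward- and downward-stability w.r.t. G_0. Then P is minimally Markovian to G_0, i.e., P is Markovian to G_0 and sk(G_0) = sk(P). -/

import Mathlib

open MeasureTheory ProbabilityTheory

/-! ## Mixed graphs, m-separation, and related graphical notions -/

/-- A mixed graph with arrows (`i → j`) and bidirected arcs (`i ↔ j`). -/
structure MixedGraph (V : Type) where
  arrow : V → V → Prop
  arc : V → V → Prop

namespace MixedGraph

variable {V : Type} (G : MixedGraph V)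

/-- `G.anc i j` : `i` is an ancestor of `j`, i.e. there is a directed path from `i` to `j`. -/
def anc (i j : V) : Prop := Relation.TransGen G.arrow i j

/-- Adjacency: there is some edge between `i` and `j`. -/
def adj (i j : V) : Prop := G.arrow i j ∨ G.arrow j i ∨ G.arc i j

/-- A directed ancestral graph: a simple mixed graph with arrows and arcs, no directed
cycle, and no arc one of whose endpoints is an ancestor of the other. -/
def IsDirectedAncestral : Prop :=
  (∀ i j, G.arc i j ↔ G.arc j i) ∧
  (∀ i, ¬ G.arc i i) ∧
  (∀ i j, ¬ (G.arrow i j ∧ G.arrow j i)) ∧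
  (∀ i j, ¬ (G.arrow i j ∧ G.arc i j)) ∧
  (∀ i, ¬ G.anc i i) ∧
  (∀ i j, G.arc i j → ¬ G.anc i j ∧ ¬ G.anc j i)

/-- A DAG: only arrows, and no directed cycle. -/
def IsDAG : Prop := (∀ i j, ¬ G.arc i j) ∧ (∀ i, ¬ G.anc i i)

/-- There is an edge between `i` and `j` with an arrowhead at `j`. -/
def headInto (i j : V) : Prop := G.arrow i j ∨ G.arc i j

/-- The inner node `b` of a tripath `⟨a,b,c⟩` is a collider. -/
def collider (a b c : V) : Prop := G.headInto a b ∧ G.headInto c b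

/-- The list of nodes `p` is a path which is connecting given `C` : consecutive nodes are
adjacent, no node is repeated, every collider inner node is in `C` or an ancestor of a node
in `C`, and every non-collider inner node is not in `C`. -/
def Connecting (C : Set V) (p : List V) : Prop :=
  p.Nodup ∧ p.Chain' G.adj ∧
  ∀ t, 0 < t → ∀ (h1 : t - 1 < p.length) (h2 : t < p.length) (h3 : t + 1 < p.length),
    (G.collider (p.get ⟨t-1, h1⟩) (p.get ⟨t, h2⟩) (p.get ⟨t+1, h3⟩) →
      p.get ⟨t, h2⟩ ∈ C ∨ ∃ c ∈ C, G.anc (p.get ⟨t, h2⟩) c) ∧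
    (¬ G.collider (p.get ⟨t-1, h1⟩) (p.get ⟨t, h2⟩) (p.get ⟨t+1, h3⟩) →
      p.get ⟨t, h2⟩ ∉ C)

/-- m-separation : `A ⊥ B | C` in `G` iff there is no connecting path between `A` and `B`
given `C`. -/
def mSep (A B C : Set V) : Prop :=
  ¬ ∃ p : List V, G.Connecting C p ∧
      (∃ a ∈ A, p.head? = some a) ∧ (∃ b ∈ B, p.getLast? = some b)

/-- Two graphs are Markov equivalent if they induce the same independence model by
m-separation. -/
def MarkovEquiv (H : MixedGraph V) : Prop :=
  ∀ A B C : Set V, Disjoint A B → Disjoint A C → Disjoint B C →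
    (G.mSep A B C ↔ H.mSep A B C)

/-- `G` is maximal: every pair of non-adjacent nodes is separated given some set. -/
def Maximal : Prop :=
  ∀ i j : V, i ≠ j → ¬ G.adj i j → ∃ C : Set V, i ∉ C ∧ j ∉ C ∧ G.mSep {i} {j} C

/-- `an(i,j) = (an(i) ∪ an(j)) \ {i,j}`. -/
def anSet (i j : V) : Set V :=
  {k | (G.anc k i ∨ G.anc k j) ∧ k ≠ i ∧ k ≠ j}

/-- The strict form of the minimal order of `G` : `a < b` iff `b` is an ancestor of `a`. -/
def minLt (a b : V) : Prop := G.anc b a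

end MixedGraph

/-! ## Abstract (singleton) independence relations and stability conditions -/

section IndependenceRelations

variable {V : Type}

/-- Ordered upward-stability of a singleton independence relation `ci` w.r.t. the strict
partial order `lt`. -/
def UpStab (lt : V → V → Prop) (ci : V → V → Set V → Prop) : Prop :=
  ∀ i j (C : Set V), i ≠ j → i ∉ C → j ∉ C → ci i j C →
    ∀ k, k ≠ i → k ≠ j → (lt i k ∨ lt j k) → ci i j (C ∪ {k})

/-- Ordered downward-stability of a singleton independence relation `ci` w.r.t. the strict
partial order `lt`. -/
def DownStab (lt : V → V → Prop) (ci : V → V → Set V → Prop) : Prop :=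
  ∀ i j (C : Set V), i ≠ j → i ∉ C → j ∉ C → ci i j C →
    ∀ k, ¬ lt i k → ¬ lt j k → (∀ l ∈ C \ {k}, ¬ lt l k) → ci i j (C \ {k})

/-- The skeleton of an independence relation: `i` and `j` are adjacent iff there is no `C`
with `⟨i,j|C⟩` an independence. -/
def skP (ci : V → V → Set V → Prop) (i j : V) : Prop :=
  i ≠ j ∧ ¬ ∃ C : Set V, i ∉ C ∧ j ∉ C ∧ ci i j C

/-- An output of a natural constraint-based structure-learning algorithm: a graph `H` whose
skeleton is the skeleton of the independence relation `ci`, obtained by directing the edges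
of that skeleton according to a `P`-compatible partial order (given here by its strict form
`lt`, required to coincide with the minimal order of `H`), w.r.t. which ordered upward- and
downward-stability hold. -/
def NaturalOutput (ci : V → V → Set V → Prop) (H : MixedGraph V) : Prop :=
  (∀ i j, H.adj i j ↔ skP ci i j) ∧
  ∃ lt : V → V → Prop, Irreflexive lt ∧ Transitive lt ∧
    (∀ i j, H.arrow i j ↔ (skP ci i j ∧ lt j i)) ∧
    (∀ i j, H.arc i j ↔ (skP ci i j ∧ ¬ lt i j ∧ ¬ lt j i)) ∧
    (∀ a b, lt a b ↔ H.minLt a b) ∧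
    UpStab lt ci ∧ DownStab lt ci

/-- Singleton-transitivity. -/
def SingletonTransitive (ci : V → V → Set V → Prop) : Prop :=
  ∀ i j k (C : Set V), i ≠ j → i ≠ k → j ≠ k → i ∉ C → j ∉ C → k ∉ C →
    ci i j C → ci i j (C ∪ {k}) → ci i k C ∨ ci j k C

/-- `ci` is V-unstable : there is a V-configuration `⟨i,k,j⟩` in the skeleton of `ci` and a
set `C` disjoint from `{i,j,k}` with `⟨i,j|C⟩` and `⟨i,j|C∪{k}⟩` independencies. -/
def VUnstable (ci : V → V → Set V → Prop) : Prop :=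
  ∃ i k j : V, ∃ C : Set V, i ≠ j ∧ i ≠ k ∧ j ≠ k ∧
    skP ci i k ∧ skP ci k j ∧ ¬ skP ci i j ∧
    i ∉ C ∧ j ∉ C ∧ k ∉ C ∧ ci i j C ∧ ci i j (C ∪ {k})

def VStable (ci : V → V → Set V → Prop) : Prop := ¬ VUnstable ci

/-- `ci` is path-unstable : there is a path `⟨i, i₁, …, i_r, k, j⟩` in the skeleton of `ci`
with `i,j` non-adjacent and every `i_n` adjacent to `j`, and a set `C` disjoint from
`{i,j,k}`, such that `⟨i,j | U∪C⟩` and `⟨i,j | U∪C∪{k}⟩` are independencies, where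
`U = {i₁,…,i_r}`. -/
def PathUnstable (ci : V → V → Set V → Prop) : Prop :=
  ∃ (i k j : V) (is : List V) (C : Set V),
    (i :: (is ++ [k, j])).Nodup ∧
    (i :: (is ++ [k, j])).Chain' (skP ci) ∧
    ¬ skP ci i j ∧
    (∀ m ∈ is, skP ci m j) ∧
    i ∉ C ∧ j ∉ C ∧ k ∉ C ∧
    ci i j ({m | m ∈ is} ∪ C) ∧ ci i j (({m | m ∈ is} ∪ C) ∪ {k})

def PathStable (ci : V → V → Set V → Prop) : Prop := ¬ PathUnstable ci

/-- The uniqueness property: all maximal directed ancestral graphs with the skeleton of `ci`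
w.r.t. (the minimal order of) which `ci` satisfies ordered upward- and downward-stability
are Markov equivalent. -/
def UniquenessProp (ci : V → V → Set V → Prop) : Prop :=
  ∀ H1 H2 : MixedGraph V,
    H1.IsDirectedAncestral → H1.Maximal → (∀ i j, H1.adj i j ↔ skP ci i j) →
      UpStab H1.minLt ci → DownStab H1.minLt ci →
    H2.IsDirectedAncestral → H2.Maximal → (∀ i j, H2.adj i j ↔ skP ci i j) →
      UpStab H2.minLt ci → DownStab H2.minLt ci →
    H1.MarkovEquiv H2

/-- The DAG-uniqueness property: all DAGs with the skeleton of `ci` w.r.t. which `ci`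
satisfies ordered upward- and downward-stability are Markov equivalent. -/
def DAGUniquenessProp (ci : V → V → Set V → Prop) : Prop :=
  ∀ H1 H2 : MixedGraph V,
    H1.IsDAG → (∀ i j, H1.adj i j ↔ skP ci i j) →
      UpStab H1.minLt ci → DownStab H1.minLt ci →
    H2.IsDAG → (∀ i j, H2.adj i j ↔ skP ci i j) →
      UpStab H2.minLt ci → DownStab H2.minLt ci →
    H1.MarkovEquiv H2

end IndependenceRelations

/-! ## Probabilistic conditional independence of collections of variables -/

section Probabilistic

variable {V : Type} {Ω : Type} [MeasurableSpace Ω]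
  {𝓧 : V → Type}

/-- The tuple of variables `X_A`. -/
def restrictVars (X : ∀ v, Ω → 𝓧 v) (A : Set V) : Ω → ∀ a : A, 𝓧 a :=
  fun ω a => X a ω

variable [StandardBorelSpace Ω] [Nonempty Ω] [∀ v, MeasurableSpace (𝓧 v)]

theorem measurable_restrictVars {X : ∀ v, Ω → 𝓧 v} (hX : ∀ v, Measurable (X v))
    (A : Set V) : Measurable (restrictVars X A) :=
  measurable_pi_lambda _ fun a => hX a

/-- `⟨A,B|C⟩ ∈ J(P)` : the tuple `X_A` is conditionally independent of `X_B` given `X_C`. -/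
def CI (μ : Measure Ω) [IsFiniteMeasure μ] (X : ∀ v, Ω → 𝓧 v)
    (hX : ∀ v, Measurable (X v)) (A B C : Set V) : Prop :=
  CondIndepFun (MeasurableSpace.comap (restrictVars X C) MeasurableSpace.pi)
    (Measurable.comap_le (measurable_restrictVars hX C))
    (restrictVars X A) (restrictVars X B) μ

/-- Singleton conditional independence `i ⫫ j | C`. -/
def ciP (μ : Measure Ω) [IsFiniteMeasure μ] (X : ∀ v, Ω → 𝓧 v)
    (hX : ∀ v, Measurable (X v)) (i j : V) (C : Set V) : Prop :=
  CI μ X hX {i} {j} C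

/-- `P` is Markovian to `G` : `J(G) ⊆ J(P)`. -/
def Markovian (μ : Measure Ω) [IsFiniteMeasure μ] (X : ∀ v, Ω → 𝓧 v)
    (hX : ∀ v, Measurable (X v)) (G : MixedGraph V) : Prop :=
  ∀ A B C : Set V, Disjoint A B → Disjoint A C → Disjoint B C →
    G.mSep A B C → CI μ X hX A B C

/-- `P` and `G` are faithful : `J(G) = J(P)`. -/
def Faithful (μ : Measure Ω) [IsFiniteMeasure μ] (X : ∀ v, Ω → 𝓧 v)
    (hX : ∀ v, Measurable (X v)) (G : MixedGraph V) : Prop :=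
  ∀ A B C : Set V, Disjoint A B → Disjoint A C → Disjoint B C →
    (G.mSep A B C ↔ CI μ X hX A B C)

/-- `P` is converse pairwise Markovian to `G`. -/
def ConvPairwiseMarkov (μ : Measure Ω) [IsFiniteMeasure μ] (X : ∀ v, Ω → 𝓧 v)
    (hX : ∀ v, Measurable (X v)) (G : MixedGraph V) : Prop :=
  ∀ i j : V, i ≠ j → ciP μ X hX i j (G.anSet i j) → ¬ G.adj i j

end Probabilistic

/-!
Let `i` and `j` be adjacent in `G` and suppose that `i ⫫ j | C` for some `C`. Upward-stability
enlarges `C` to `C ∪ an(i,j)`. The nodes of this set outside `an(i,j)` are ancestors neither of `i`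
and `j` nor of any node of `an(i,j)`, so downward-stability deletes them one at a time, always a
node without descendants among those still to be deleted. This leaves `i ⫫ j | an(i,j)`, which the
converse pairwise Markov property forbids. Conversely, maximality and the Markov property give every
non-adjacent pair a separating set.
-/

section Stability

variable {V : Type} {lt : V → V → Prop} {ci : V → V → Set V → Prop} {i j : V} {C D : Set V}

theorem UpStab.union (hup : UpStab lt ci) (hij : i ≠ j) {S : Set V} (hS : S.Finite)
    (hi : i ∉ C ∪ S) (hj : j ∉ C ∪ S) (hlt : ∀ k ∈ S, lt i k ∨ lt j k) (h : ci i j C) :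
    ci i j (C ∪ S) := by
  induction S, hS using Set.Finite.induction_on with
  | empty => rwa [Set.union_empty]
  | @insert a S _ _ ih =>
    rw [← Set.union_singleton, ← Set.union_assoc] at hi hj ⊢
    obtain ⟨hiS, hia⟩ : i ∉ C ∪ S ∧ i ≠ a := not_or.1 hi
    obtain ⟨hjS, hja⟩ : j ∉ C ∪ S ∧ j ≠ a := not_or.1 hj
    have hciS : ci i j (C ∪ S) := ih hiS hjS fun k hk => hlt k (Set.mem_insert_of_mem a hk)
    exact hup i j (C ∪ S) hij hiS hjS hciS a hia.symm hja.symm (hlt a (Set.mem_insert a S))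

theorem DownStab.of_subset [IsStrictOrder V lt] (hdown : DownStab lt ci) (hij : i ≠ j) (hCD : C ⊆ D)
    (hfin : (D \ C).Finite) (hi : i ∉ D) (hj : j ∉ D) (hlti : ∀ k ∈ D \ C, ¬ lt i k)
    (hltj : ∀ k ∈ D \ C, ¬ lt j k) (hltC : ∀ k ∈ D \ C, ∀ l ∈ C, ¬ lt l k) (h : ci i j D) :
    ci i j C := by
  induction hn : (D \ C).ncard generalizing D with
  | zero =>
    have hDC : D ⊆ C := Set.sdiff_eq_empty.1 ((Set.ncard_eq_zero hfin).1 hn)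
    rwa [hCD.antisymm hDC]
  | succ n ih =>
    obtain ⟨k, hk, hmin⟩ : ∃ k ∈ D \ C, ∀ l ∈ D \ C, ¬ lt l k := by
      have hne : (D \ C).Nonempty := (Set.ncard_pos hfin).1 (by lia)
      obtain ⟨⟨k, hk⟩, -, hmin⟩ :=
        WellFounded.has_min (hfin.wellFoundedOn (r := lt)) Set.univ
          (Set.nonempty_iff_univ_nonempty.1 hne.to_subtype)
      exact ⟨k, hk, fun l hl => hmin ⟨l, hl⟩ trivial⟩
    have hltk : ∀ l ∈ D \ {k}, ¬ lt l k := fun l hl => by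
      by_cases hlC : l ∈ C
      · exact hltC k hk l hlC
      · exact hmin l ⟨hl.1, hlC⟩
    have hsub : (D \ {k}) \ C ⊆ D \ C := Set.sdiff_subset_sdiff_left Set.sdiff_subset
    have hcard : ((D \ {k}) \ C).ncard = n := by
      rw [Set.sdiff_sdiff_comm, Set.ncard_sdiff_singleton_of_mem hk, hn, Nat.add_sub_cancel]
    exact ih (Set.subset_sdiff_singleton hCD hk.2) (hfin.subset hsub) (fun hiD => hi hiD.1)
      (fun hjD => hj hjD.1) (fun l hl => hlti l (hsub hl)) (fun l hl => hltj l (hsub hl))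
      (fun l hl => hltC l (hsub hl))
      (hdown i j D hij hi hj h k (hlti k hk) (hltj k hk) hltk) hcard

end Stability

namespace MixedGraph

variable {V : Type} {G : MixedGraph V} {ci : V → V → Set V → Prop} {i j : V} {C : Set V}

theorem isStrictOrder_minLt (hcyc : ∀ i, ¬ G.anc i i) : IsStrictOrder V G.minLt where
  irrefl := hcyc
  trans _ _ _ hab hbc := Relation.TransGen.trans hbc hab

theorem ne_of_adj (hcyc : ∀ i, ¬ G.anc i i) (hloop : ∀ i, ¬ G.arc i i) (h : G.adj i j) :
    i ≠ j := by
  rintro rfl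
  rcases h with h | h | h
  · exact hcyc i (.single h)
  · exact hcyc i (.single h)
  · exact hloop i h

theorem left_notMem_anSet : i ∉ G.anSet i j := fun h => h.2.1 rfl

theorem right_notMem_anSet : j ∉ G.anSet i j := fun h => h.2.2 rfl

theorem mem_anSet_of_anc {k l : V} (hki : k ≠ i) (hkj : k ≠ j) (hl : l ∈ G.anSet i j)
    (hkl : G.anc k l) : k ∈ G.anSet i j :=
  ⟨hl.1.imp hkl.trans hkl.trans, hki, hkj⟩

theorem ci_anSet_of_ci (hcyc : ∀ i, ¬ G.anc i i) (hup : UpStab G.minLt ci)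
    (hdown : DownStab G.minLt ci) (hfin : (G.anSet i j).Finite) (hC : C.Finite) (hij : i ≠ j)
    (hi : i ∉ C) (hj : j ∉ C) (h : ci i j C) : ci i j (G.anSet i j) := by
  have := isStrictOrder_minLt hcyc
  have hi' : i ∉ C ∪ G.anSet i j := not_or_intro hi left_notMem_anSet
  have hj' : j ∉ C ∪ G.anSet i j := not_or_intro hj right_notMem_anSet
  have hne : ∀ k ∈ (C ∪ G.anSet i j) \ G.anSet i j, k ≠ i ∧ k ≠ j := fun k hk =>
    ⟨ne_of_mem_of_not_mem hk.1 hi', ne_of_mem_of_not_mem hk.1 hj'⟩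
  have hunion : ci i j (C ∪ G.anSet i j) := hup.union hij hfin hi' hj' (fun k hk => hk.1) h
  exact hdown.of_subset hij Set.subset_union_right ((hC.union hfin).subset Set.sdiff_subset) hi' hj'
    (fun k hk hki => hk.2 ⟨.inl hki, hne k hk⟩)
    (fun k hk hkj => hk.2 ⟨.inr hkj, hne k hk⟩)
    (fun k hk l hl hkl => hk.2 (mem_anSet_of_anc (hne k hk).1 (hne k hk).2 hl hkl)) hunion

end MixedGraph

theorem Markovian.ciP_of_mSep {V Ω : Type} [MeasurableSpace Ω] [StandardBorelSpace Ω] [Nonempty Ω]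
    {μ : Measure Ω} [IsFiniteMeasure μ] {𝓧 : V → Type} [∀ v, MeasurableSpace (𝓧 v)]
    {X : ∀ v, Ω → 𝓧 v} {hX : ∀ v, Measurable (X v)} {G : MixedGraph V}
    (hMark : Markovian μ X hX G) {i j : V} {C : Set V} (hij : i ≠ j) (hi : i ∉ C) (hj : j ∉ C)
    (h : G.mSep {i} {j} C) : ciP μ X hX i j C :=
  hMark {i} {j} C (Set.disjoint_singleton.2 hij) (Set.disjoint_singleton_left.2 hi)
    (Set.disjoint_singleton_left.2 hj) h

theorem statement_5_general {V : Type} [Finite V] (G : MixedGraph V)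
    (hcyc : ∀ i, ¬ G.anc i i) (hloop : ∀ i, ¬ G.arc i i) (hmax : G.Maximal)
    (ci : V → V → Set V → Prop)
    (hMark : ∀ i j C, i ≠ j → i ∉ C → j ∉ C → G.mSep {i} {j} C → ci i j C)
    (hconv : ∀ i j, i ≠ j → ci i j (G.anSet i j) → ¬ G.adj i j)
    (hup : UpStab G.minLt ci) (hdown : DownStab G.minLt ci) (i j : V) :
    G.adj i j ↔ skP ci i j := by
  constructor
  · intro hadj
    have hij : i ≠ j := MixedGraph.ne_of_adj hcyc hloop hadj
    refine ⟨hij, fun ⟨C, hi, hj, h⟩ => hconv i j hij ?_ hadj⟩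
    exact MixedGraph.ci_anSet_of_ci hcyc hup hdown (Set.toFinite _) (Set.toFinite C) hij hi hj h
  · rintro ⟨hij, hnsep⟩
    by_contra hadj
    obtain ⟨C, hi, hj, hsep⟩ := hmax i j hij hadj
    exact hnsep ⟨C, hi, hj, hMark i j C hij hi hj hsep⟩

/-- Corollary 10 of Sadeghi–Soo. -/
theorem statement_5 {V : Type} [Fintype V]
    {Ω : Type} [MeasurableSpace Ω] [StandardBorelSpace Ω] [Nonempty Ω]
    (μ : Measure Ω) [IsProbabilityMeasure μ]
    {𝓧 : V → Type} [∀ v, MeasurableSpace (𝓧 v)]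
    (X : ∀ v, Ω → 𝓧 v) (hX : ∀ v, Measurable (X v))
    (G0 : MixedGraph V) (hanc : G0.IsDirectedAncestral) (hmax : G0.Maximal)
    (hMark : Markovian μ X hX G0)
    (hconv : ConvPairwiseMarkov μ X hX G0)
    (hup : UpStab G0.minLt (ciP μ X hX)) (hdown : DownStab G0.minLt (ciP μ X hX)) :
    Markovian μ X hX G0 ∧ (∀ i j, G0.adj i j ↔ skP (ciP μ X hX) i j) := by
  obtain ⟨-, hloop, -, -, hcyc, -⟩ := hanc
  exact ⟨hMark, statement_5_general G0 hcyc hloop hmax (ciP μ X hX)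
    (fun _ _ _ => hMark.ciP_of_mSep) hconv hup hdown⟩
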